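/- The series ∑_{n=0}^∞ ζ(2n)/((2n+1)(n+1)·16^n) equals 2G/π - 35ζ(3)/(4π²), where G is Catalan's constant. -/

import Mathlib

open Real
noncomputable def catalanConst : ℝ := ∑' n : ℕ, (-1) ^ n / (2 * (n : ℝ) + 1) ^ 2
open Filter Topology MeasureTheory

noncomputable def Zr (n : ℕ) : ℝ := ∑' k : ℕ, 1 / ((k : ℝ) + 1) ^ n

lemma Zr_summable {n : ℕ} (hn : 1 < n) : Summable (fun k : ℕ => 1 / ((k : ℝ) + 1) ^ n) := by
  have := (summable_nat_add_iff 1).2 (Real.summable_one_div_nat_pow.2 hn)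
  simpa using this

lemma zeta_eq_Zr {n : ℕ} (hn : 1 < n) : riemannZeta (n : ℂ) = (Zr n : ℂ) := by
  rw [zeta_eq_tsum_one_div_nat_add_one_cpow (by simpa using hn), Zr, Complex.ofReal_tsum]
  congr 1; ext k
  push_cast
  rw [Complex.cpow_natCast]

lemma cot_hasSum {x : ℝ} (h0 : 0 < x) (h1 : x < 1) :
    HasSum (fun k : ℕ => x ^ 2 / (((k : ℝ) + 1) ^ 2 - x ^ 2)) (1 / 2 - π * x / 2 * Real.cot (π * x)) := by
  have hx : (x : ℂ) ∈ Complex.integerComplement := by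
    rw [Complex.mem_integerComplement_iff]
    rintro ⟨n, hn⟩
    have : (n : ℝ) = x := by exact_mod_cast hn
    rw [← this] at h0 h1
    have a : 0 < n := by exact_mod_cast h0
    have b : n < 1 := by exact_mod_cast h1
    omega
  have H := (summable_cotTerm hx).hasSum
  have e := cot_series_rep' hx
  unfold cotTerm at H
  rw [← e] at H
  have H' : HasSum (fun k : ℕ => 1 / (x - ((k : ℝ) + 1)) + 1 / (x + ((k : ℝ) + 1)))
      (π * Real.cot (π * x) - 1 / x) := by
    rw [← Complex.hasSum_ofReal]
    push_cast
    exact H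
  convert! H'.mul_left (-x / 2) using 1
  · ext k
    have hk : (0 : ℝ) ≤ k := k.cast_nonneg
    have a : x - ((k : ℝ) + 1) ≠ 0 := by intro h; linarith
    have b : x + ((k : ℝ) + 1) ≠ 0 := by intro h; linarith
    have c : ((k : ℝ) + 1) ^ 2 - x ^ 2 ≠ 0 := by
      have : ((k : ℝ) + 1) ^ 2 - x ^ 2 = -((x - ((k : ℝ) + 1)) * (x + ((k : ℝ) + 1))) := by ring
      rw [this]; exact neg_ne_zero.2 (mul_ne_zero a b)
    field_simp
    ring
  · field_simp
    ring

lemma cot_power {x : ℝ} (h0 : 0 < x) (h1 : x < 1) :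
    HasSum (fun n : ℕ => Zr (2 * n + 2) * x ^ (2 * n + 2)) (1 / 2 - π * x / 2 * Real.cot (π * x)) := by
  have hg : ∀ k : ℕ, HasSum (fun n : ℕ => (x / ((k : ℝ) + 1)) ^ (2 * n + 2))
      (x ^ 2 / (((k : ℝ) + 1) ^ 2 - x ^ 2)) := by
    intro k
    have hk : (0 : ℝ) ≤ k := k.cast_nonneg
    have hq : x / ((k : ℝ) + 1) < 1 := by rw [div_lt_one (by linarith)]; linarith
    have hq0 : 0 ≤ x / ((k : ℝ) + 1) := by positivity
    have := (hasSum_geometric_of_lt_one (r := (x / ((k : ℝ) + 1)) ^ 2) (by positivity)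
      (by nlinarith)).mul_left ((x / ((k : ℝ) + 1)) ^ 2)
    convert! this using 1
    · ext n; ring
    · have c : ((k : ℝ) + 1) ^ 2 - x ^ 2 ≠ 0 := by nlinarith
      have c' : 1 - (x / ((k : ℝ) + 1)) ^ 2 = (((k : ℝ) + 1) ^ 2 - x ^ 2) / ((k : ℝ) + 1) ^ 2 := by
        field_simp
      rw [c']
      field_simp
  have hs := cot_hasSum h0 h1
  have hS : Summable (fun p : ℕ × ℕ => (x / ((p.1 : ℝ) + 1)) ^ (2 * p.2 + 2)) := by
    rw [summable_prod_of_nonneg (fun p => by positivity)]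
    refine ⟨fun k => (hg k).summable, ?_⟩
    simpa only [fun k => (hg k).tsum_eq] using hs.summable
  have e1 := hS.hasSum.prod_fiberwise hg
  have e2 := e1.unique hs
  have hS2 := (Equiv.prodComm ℕ ℕ).hasSum_iff.2 hS.hasSum
  rw [e2] at hS2
  refine hS2.prod_fiberwise (fun n => ?_)
  have := (Zr_summable (n := 2 * n + 2) (by omega)).hasSum.mul_right (x ^ (2 * n + 2))
  convert! this using 1
  ext k
  simp [div_pow]
  field_simp

lemma int_hasSum :
    HasSum (fun n : ℕ => Zr (2 * n + 2) / 16 ^ (n + 1) * (1 / ((2 * n + 3) * (2 * n + 4))))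
      (∫ t in (0:ℝ)..1, (1 - t) * (1 / 2 - π * t / 8 * Real.cot (π * t / 4))) := by
  have hZ : ∀ n, 0 ≤ Zr n := fun n => tsum_nonneg (fun k => by positivity)
  have hb := (cot_power (x := 1 / 4) (by norm_num) (by norm_num)).summable
  have := intervalIntegral.hasSum_integral_of_dominated_convergence (μ := volume) (a := 0) (b := 1)
    (F := fun (n : ℕ) (t : ℝ) => (1 - t) * (Zr (2 * n + 2) * (t / 4) ^ (2 * n + 2)))
    (f := fun t => (1 - t) * (1 / 2 - π * t / 8 * Real.cot (π * t / 4)))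
    (fun n _ => Zr (2 * n + 2) * (1 / 4) ^ (2 * n + 2))
    (fun n => Continuous.aestronglyMeasurable (by fun_prop))
    (fun n => by
      refine ae_of_all _ fun t ht => ?_
      rw [Set.uIoc_of_le zero_le_one] at ht
      have h1 : 0 ≤ 1 - t := by linarith [ht.2]
      have h2 : 0 ≤ t := ht.1.le
      have := hZ (2 * n + 2)
      rw [Real.norm_of_nonneg (by positivity)]
      calc _ ≤ 1 * (Zr (2 * n + 2) * (1 / 4) ^ (2 * n + 2)) := by
            gcongr
            · linarith
            · exact ht.2
        _ = _ := one_mul _)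
    (ae_of_all _ fun t ht => hb)
    intervalIntegrable_const
    (by
      refine ae_of_all _ fun t ht => ?_
      rw [Set.uIoc_of_le zero_le_one] at ht
      have := (cot_power (x := t / 4) (by linarith [ht.1]) (by linarith [ht.2])).mul_left (1 - t)
      convert! this using 1
      rw [show π * (t / 4) = π * t / 4 by ring]
      ring)
  convert! this using 1
  ext n
  have e : ∀ t : ℝ, (1 - t) * (Zr (2 * n + 2) * (t / 4) ^ (2 * n + 2)) =
      Zr (2 * n + 2) / 16 ^ (n + 1) * (t ^ (2 * n + 2) - t ^ (2 * n + 3)) := by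
    intro t
    rw [div_pow, show (4:ℝ) ^ (2 * n + 2) = 16 ^ (n + 1) by
      rw [show 2 * n + 2 = 2 * (n + 1) by ring, pow_mul]; norm_num]
    ring
  simp only [e]
  rw [intervalIntegral.integral_const_mul, intervalIntegral.integral_sub
    (Continuous.intervalIntegrable (by fun_prop) _ _) (Continuous.intervalIntegrable (by fun_prop) _ _),
    integral_pow, integral_pow]
  congr 1
  have : (0:ℝ) ≤ n := n.cast_nonneg
  push_cast
  simp
  field_simp
  ring

/-- kernel -/
noncomputable def Kr (r θ : ℝ) : ℝ := r * Real.sin θ / (1 - 2 * r * Real.cos θ + r ^ 2)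

lemma Kr_den_pos {r θ : ℝ} (h0 : 0 ≤ r) (h1 : r < 1) : 0 < 1 - 2 * r * Real.cos θ + r ^ 2 := by
  nlinarith [Real.cos_le_one θ, mul_nonneg h0 (sub_nonneg.2 (Real.cos_le_one θ)), sq_pos_of_pos (sub_pos.2 h1)]

lemma Kr_cont {r : ℝ} (h0 : 0 ≤ r) (h1 : r < 1) : Continuous (Kr r) := by
  unfold Kr
  exact Continuous.div (by fun_prop) (by fun_prop) (fun θ => (Kr_den_pos h0 h1).ne')

lemma Kr_hasSum {r : ℝ} (h0 : 0 ≤ r) (h1 : r < 1) (θ : ℝ) :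
    HasSum (fun k : ℕ => r ^ k * Real.sin (k * θ)) (Kr r θ) := by
  have hn : ‖(r : ℂ) * Complex.exp (θ * Complex.I)‖ < 1 := by
    rw [norm_mul, Complex.norm_exp_ofReal_mul_I, mul_one, Complex.norm_real, Real.norm_of_nonneg h0]
    exact h1
  have := Complex.hasSum_im (hasSum_geometric_of_norm_lt_one hn)
  convert! this using 1
  · ext k
    rw [mul_pow, ← Complex.exp_nat_mul, ← Complex.ofReal_pow, Complex.im_ofReal_mul,
      ← mul_assoc, ← Complex.ofReal_natCast, ← Complex.ofReal_mul, Complex.exp_ofReal_mul_I_im]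
  · rw [Complex.inv_im, Complex.normSq_apply]
    simp [Complex.exp_ofReal_mul_I_re, Complex.exp_ofReal_mul_I_im]
    unfold Kr
    congr 1
    nlinarith [Real.sin_sq_add_cos_sq θ]

noncomputable def Ik (k : ℕ) : ℝ := - (Real.sin (k * (π / 2)) / (k * (π / 2)) ^ 2) +
  (2 - 2 * Real.cos (k * (π / 2))) / (k * (π / 2)) ^ 3

lemma Ik_eq (k : ℕ) : ∫ t in (0:ℝ)..1, t * (1 - t) * Real.sin (k * (π / 2 * t)) = Ik k := by
  rcases Nat.eq_zero_or_pos k with rfl | hk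
  · simp [Ik]
  have ha : (k * (π / 2) : ℝ) ≠ 0 := by positivity
  unfold Ik
  have e : ∀ t : ℝ, k * (π / 2 * t) = (k * (π / 2)) * t := fun t => by ring
  simp only [e]
  generalize (k * (π / 2) : ℝ) = a at *
  rw [intervalIntegral.integral_eq_sub_of_hasDerivAt
    (f := fun t => -(t - t ^ 2) * Real.cos (a * t) / a + (1 - 2 * t) * Real.sin (a * t) / a ^ 2
      - 2 * Real.cos (a * t) / a ^ 3)]
  · simp; field_simp; ring
  · intro t _
    have h1 : HasDerivAt (fun t => a * t) a t := by simpa using (hasDerivAt_id t).const_mul a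
    have h2 := h1.sin
    have h3 := h1.cos
    have h4 : HasDerivAt (fun t : ℝ => -(t - t ^ 2)) (-(1 - 2 * t)) t := by
      convert! ((hasDerivAt_id t).sub (hasDerivAt_pow 2 t)).neg using 1
      simp
    have h5 : HasDerivAt (fun t : ℝ => 1 - 2 * t) (-2) t := by
      simpa using ((hasDerivAt_id t).const_mul 2).const_sub 1
    convert! (((h4.mul h3).div_const a).add ((h5.mul h2).div_const (a ^ 2))).sub
      ((h3.const_mul 2).div_const (a ^ 3)) using 1
    field_simp
    ring
  · exact Continuous.intervalIntegrable (by fun_prop) _ _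

lemma Kr_int {r : ℝ} (h0 : 0 ≤ r) (h1 : r < 1) :
    HasSum (fun k : ℕ => Ik k * r ^ k) (∫ t in (0:ℝ)..1, t * (1 - t) * Kr r (π / 2 * t)) := by
  have := intervalIntegral.hasSum_integral_of_dominated_convergence (μ := volume) (a := 0) (b := 1)
    (F := fun (k : ℕ) (t : ℝ) => t * (1 - t) * Real.sin (k * (π / 2 * t)) * r ^ k)
    (f := fun t => t * (1 - t) * Kr r (π / 2 * t))
    (fun k _ => r ^ k)
    (fun n => Continuous.aestronglyMeasurable (by fun_prop))
    (fun n => by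
      refine ae_of_all _ fun t ht => ?_
      rw [Set.uIoc_of_le zero_le_one] at ht
      rw [norm_mul, norm_mul, Real.norm_of_nonneg (pow_nonneg h0 n),
        Real.norm_of_nonneg (mul_nonneg ht.1.le (by linarith [ht.2]))]
      have a : t * (1 - t) ≤ 1 := by nlinarith [ht.1, ht.2]
      have b := Real.abs_sin_le_one (n * (π / 2 * t))
      rw [← Real.norm_eq_abs] at b
      have c : t * (1 - t) * ‖Real.sin (n * (π / 2 * t))‖ ≤ 1 :=
        mul_le_one₀ a (norm_nonneg _) b
      exact mul_le_of_le_one_left (pow_nonneg h0 n) c)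
    (ae_of_all _ fun t ht => summable_geometric_of_lt_one h0 h1)
    intervalIntegrable_const
    (ae_of_all _ fun t ht => by
      convert! (Kr_hasSum h0 h1 (π / 2 * t)).mul_left (t * (1 - t)) using 1
      ext k; ring)
  simpa only [intervalIntegral.integral_mul_const, Ik_eq] using this

lemma Kr_bound {r t : ℝ} (h0 : 0 ≤ r) (h1 : r < 1) (ht : 0 < t) (ht1 : t ≤ 1) :
    |t * Kr r (π / 2 * t)| ≤ 1 := by
  have hs : t ≤ Real.sin (π / 2 * t) := by
    have := Real.mul_le_sin (x := π / 2 * t) (by positivity) (by nlinarith [pi_pos])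
    convert! this using 1
    field_simp
  have hd := Kr_den_pos (θ := π / 2 * t) h0 h1
  unfold Kr
  rw [abs_of_nonneg (by have : 0 ≤ Real.sin (π / 2 * t) := by linarith
                        positivity), ← mul_div_assoc, div_le_one hd]
  set s := Real.sin (π / 2 * t)
  set c := Real.cos (π / 2 * t)
  have hsc : s ^ 2 + c ^ 2 = 1 := Real.sin_sq_add_cos_sq _
  have : t * (r * s) ≤ s * s := by
    have : r * t ≤ s := by nlinarith
    nlinarith
  nlinarith [sq_nonneg (r - c)]

lemma Kr_lim {t : ℝ} (ht : 0 < t) (ht1 : t ≤ 1) :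
    Tendsto (fun r => Kr r (π / 2 * t)) (𝓝[<] 1) (𝓝 (Real.cot (π * t / 4) / 2)) := by
  have hs : 0 < Real.sin (π * t / 4) := Real.sin_pos_of_pos_of_lt_pi (by positivity) (by nlinarith [pi_pos])
  have e : π / 2 * t = 2 * (π * t / 4) := by ring
  have hc : Real.cos (π / 2 * t) = 1 - 2 * Real.sin (π * t / 4) ^ 2 := by
    rw [e, Real.cos_two_mul, Real.cos_sq']; ring
  have : Real.cot (π * t / 4) / 2 = Kr 1 (π / 2 * t) := by
    unfold Kr
    rw [hc, e, Real.sin_two_mul, Real.cot_eq_cos_div_sin]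
    have : 1 - 2 * 1 * (1 - 2 * Real.sin (π * t / 4) ^ 2) + 1 ^ 2 = 4 * Real.sin (π * t / 4) ^ 2 := by ring
    rw [this]
    field_simp
    ring
  rw [this]
  have : ContinuousAt (fun r => Kr r (π / 2 * t)) 1 := by
    unfold Kr
    refine ContinuousAt.div (by fun_prop) (by fun_prop) ?_
    rw [hc]
    have := pow_pos hs 2
    nlinarith
  exact this.tendsto.mono_left nhdsWithin_le_nhds

lemma int_lim :
    Tendsto (fun r => ∫ t in (0:ℝ)..1, (1 - t) * (1 / 2 - π * t / 4 * Kr r (π / 2 * t))) (𝓝[<] 1)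
      (𝓝 (∫ t in (0:ℝ)..1, (1 - t) * (1 / 2 - π * t / 8 * Real.cot (π * t / 4)))) := by
  have hev : ∀ᶠ r : ℝ in 𝓝[<] 1, 0 ≤ r ∧ r < 1 := by
    have : Set.Ioo (0:ℝ) 1 ∈ 𝓝[<] (1:ℝ) := Ioo_mem_nhdsLT (by norm_num)
    filter_upwards [this] with r hr
    exact ⟨hr.1.le, hr.2⟩
  refine intervalIntegral.tendsto_integral_filter_of_dominated_convergence
    (fun _ => 1 / 2 + π / 4) ?_ ?_ intervalIntegrable_const ?_
  · filter_upwards [hev] with r hr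
    have := Kr_cont hr.1 hr.2
    exact Continuous.aestronglyMeasurable (by fun_prop)
  · filter_upwards [hev] with r hr
    refine ae_of_all _ fun t ht => ?_
    rw [Set.uIoc_of_le zero_le_one] at ht
    have hb := Kr_bound hr.1 hr.2 ht.1 ht.2
    rw [norm_mul, Real.norm_of_nonneg (by linarith [ht.2] : 0 ≤ 1 - t)]
    have : ‖1 / 2 - π * t / 4 * Kr r (π / 2 * t)‖ ≤ 1 / 2 + π / 4 := by
      rw [Real.norm_eq_abs]
      rw [abs_le] at hb ⊢
      have hp := pi_pos
      constructor <;> nlinarith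
    have h3 : 1 - t ≤ 1 := by linarith [ht.1]
    exact (mul_le_of_le_one_left (norm_nonneg _) h3).trans this
  · refine ae_of_all _ fun t ht => ?_
    rw [Set.uIoc_of_le zero_le_one] at ht
    have := (Kr_lim ht.1 ht.2).const_mul (π * t / 4)
    convert! (this.const_sub (1 / 2)).const_mul (1 - t) using 2
    ring_nf

lemma sin_sum : HasSum (fun k : ℕ => Real.sin (k * (π / 2)) / (k : ℝ) ^ 2) catalanConst := by
  have hO : Summable (fun n : ℕ => (-1 : ℝ) ^ n / (2 * (n : ℝ) + 1) ^ 2) := by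
    refine Summable.of_norm_bounded (Zr_summable (n := 2) (by norm_num)) fun n => ?_
    rw [norm_div, norm_pow, norm_neg, norm_one, one_pow, Real.norm_of_nonneg (by positivity)]
    have : (0 : ℝ) ≤ n := n.cast_nonneg
    gcongr
    linarith
  rw [← zero_add catalanConst]
  refine HasSum.even_add_odd ?_ ?_
  · convert! hasSum_zero (α := ℝ) (β := ℕ) using 2 with m
    have : ((2 * m : ℕ) : ℝ) * (π / 2) = m * π := by push_cast; ring
    rw [this, Real.sin_nat_mul_pi, zero_div]
  · convert! hO.hasSum using 2 with m
    have : ((2 * m + 1 : ℕ) : ℝ) * (π / 2) = π / 2 + m * π := by push_cast; ring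
    rw [this, Real.sin_add_nat_mul_pi]
    push_cast
    simp

lemma Z3_sum : HasSum (fun k : ℕ => 1 / (k : ℝ) ^ 3) (Zr 3) := by
  have := (Zr_summable (n := 3) (by norm_num)).hasSum
  rw [← hasSum_nat_add_iff' 1]
  simpa [Zr] using this

lemma alt_sum : HasSum (fun k : ℕ => (-1) ^ k / (k : ℝ) ^ 3) (-(3 / 4) * Zr 3) := by
  have hE : HasSum (fun k : ℕ => 1 / ((2 * k : ℕ) : ℝ) ^ 3) (Zr 3 / 8) := by
    convert! Z3_sum.div_const 8 using 2 with k
    push_cast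
    rw [mul_pow, div_div, mul_comm]; norm_num
  have hO : Summable (fun k : ℕ => 1 / ((2 * k + 1 : ℕ) : ℝ) ^ 3) :=
    Z3_sum.summable.comp_injective (i := fun k : ℕ => 2 * k + 1) (fun a b h => by simpa using h)
  have h := (HasSum.even_add_odd (f := fun k : ℕ => 1 / (k : ℝ) ^ 3) hE hO.hasSum).unique Z3_sum
  have hO' := hO.hasSum
  rw [show ∑' k : ℕ, 1 / ((2 * k + 1 : ℕ) : ℝ) ^ 3 = 7 / 8 * Zr 3 by linarith] at hO'
  rw [show -(3 / 4) * Zr 3 = Zr 3 / 8 + -(7 / 8 * Zr 3) by ring]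
  refine HasSum.even_add_odd ?_ ?_
  · simpa [pow_mul] using hE
  · convert! hO'.neg using 2 with k
    rw [pow_succ, pow_mul]; norm_num
    ring

lemma cos_sum : HasSum (fun k : ℕ => Real.cos (k * (π / 2)) / (k : ℝ) ^ 3) (-(3 / 32) * Zr 3) := by
  rw [← add_zero (-(3 / 32) * Zr 3)]
  refine HasSum.even_add_odd ?_ ?_
  · rw [show -(3 / 32) * Zr 3 = -(3 / 4) * Zr 3 / 8 by ring]
    convert! alt_sum.div_const 8 using 2 with m
    · have : ((2 * m : ℕ) : ℝ) * (π / 2) = m * π := by push_cast; ring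
      rw [this, Real.cos_nat_mul_pi]
      push_cast
      rw [mul_pow, div_div, mul_comm]; norm_num
  · convert! hasSum_zero (α := ℝ) (β := ℕ) using 2 with m
    have : ((2 * m + 1 : ℕ) : ℝ) * (π / 2) = π / 2 + m * π := by push_cast; ring
    rw [this, Real.cos_add_nat_mul_pi]
    simp

lemma Ik_sum : HasSum Ik (-(4 / π ^ 2) * catalanConst + 35 / (2 * π ^ 3) * Zr 3) := by
  convert! (sin_sum.mul_left (-(4 / π ^ 2))).add ((Z3_sum.sub cos_sum).mul_left (16 / π ^ 3)) using 1
  · ext k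
    unfold Ik
    rcases Nat.eq_zero_or_pos k with rfl | hk
    · simp
    field_simp
    ring
  · ring

lemma int_val : (∫ t in (0:ℝ)..1, (1 - t) * (1 / 2 - π * t / 8 * Real.cot (π * t / 4))) =
    1 / 4 - π / 4 * (-(4 / π ^ 2) * catalanConst + 35 / (2 * π ^ 3) * Zr 3) := by
  have hA := Real.tendsto_tsum_powerSeries_nhdsWithin_lt Ik_sum.tendsto_sum_nat
  refine tendsto_nhds_unique int_lim (((hA.const_mul (π / 4)).const_sub (1 / 4)).congr' ?_)
  have : Set.Ioo (0:ℝ) 1 ∈ 𝓝[<] (1:ℝ) := Ioo_mem_nhdsLT (by norm_num)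
  filter_upwards [this] with r hr
  rw [(Kr_int hr.1.le hr.2).tsum_eq]
  have hc := Kr_cont hr.1.le hr.2
  have e : ∀ t : ℝ, (1 - t) * (1 / 2 - π * t / 4 * Kr r (π / 2 * t)) =
      (1 - t) * (1 / 2) - π / 4 * (t * (1 - t) * Kr r (π / 2 * t)) := fun t => by ring
  simp only [e]
  rw [intervalIntegral.integral_sub
    (Continuous.intervalIntegrable (by fun_prop) _ _) (Continuous.intervalIntegrable (by fun_prop) _ _),
    intervalIntegral.integral_const_mul, intervalIntegral.integral_mul_const,
    intervalIntegral.integral_sub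
    (Continuous.intervalIntegrable (by fun_prop) _ _) (Continuous.intervalIntegrable (by fun_prop) _ _)]
  simp
  norm_num

theorem stmt14 :
    ∑' n : ℕ, riemannZeta (2 * n) / ((2 * n + 1) * (n + 1) * 16 ^ n) =
      2 * (catalanConst : ℂ) / (π : ℂ) - 35 * riemannZeta 3 / (4 * (π : ℂ) ^ 2) := by
  have hz3 : riemannZeta 3 = (Zr 3 : ℂ) := by exact_mod_cast zeta_eq_Zr (n := 3) (by norm_num)
  have h := int_hasSum
  rw [int_val] at h
  have h2 := Complex.hasSum_ofReal.2 (h.mul_left 2)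
  refine HasSum.tsum_eq ?_
  rw [← hasSum_nat_add_iff' 1]
  convert! h2 using 1
  · ext n
    have := zeta_eq_Zr (n := 2 * n + 2) (by omega)
    push_cast at this ⊢
    rw [show (2 : ℂ) * (n + 1) = 2 * n + 2 by ring, this]
    have a : (2 * (n : ℂ) + 2 + 1) ≠ 0 := by exact_mod_cast (by omega : 2 * n + 2 + 1 ≠ 0)
    have b : ((n : ℂ) + 1 + 1) ≠ 0 := by exact_mod_cast (by omega : n + 1 + 1 ≠ 0)
    rw [show (2 * (n : ℂ) + 3) = 2 * (n : ℂ) + 2 + 1 by ring,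
      show (2 * (n : ℂ) + 4) = 2 * ((n : ℂ) + 1 + 1) by ring]
    field_simp
  · have hp : (π : ℂ) ≠ 0 := by exact_mod_cast pi_ne_zero
    rw [hz3]
    simp [riemannZeta_zero]
    field_simp
    ring
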